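/- Let d ≥ 6 be an even integer and set x := 3d/2. Let C ⊂ P^2 be a smooth plane cubic and T ⊂ P^2 a smooth plane curve of degree d/2 meeting C transversally, and let S := C ∩ T be their complete intersection (a set of 3d/2 distinct points). Then S ∈ T(2,d;3d/2)'; in particular T(2,d;3d/2)' ≠ ∅ for every even d ≥ 6. -/

import Mathlib

open MvPolynomial

noncomputable section

/-- Projective `n`-space over `k`, as the projectivization of `k^(n+1)`. -/
abbrev ProjSpace (k : Type*) [Field k] (n : ℕ) := Projectivization k (Fin (n+1) → k)

variable (k : Type*) [Field k]

/-- Evaluation at a vector, as a linear map on polynomials. -/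
def evalLM {n : ℕ} (v : Fin n → k) : MvPolynomial (Fin n) k →ₗ[k] k :=
  (MvPolynomial.aeval v).toLinearMap

/-- The submodule of polynomials vanishing together with all first partial derivatives at `v`. -/
def doubleVanishing {n : ℕ} (v : Fin n → k) : Submodule k (MvPolynomial (Fin n) k) :=
  LinearMap.ker (evalLM k v) ⊓
    ⨅ i : Fin n, LinearMap.ker ((evalLM k v).comp (MvPolynomial.pderiv i).toLinearMap)

/-- `h^0(I_{2S}(d))`: dimension of degree-`d` forms vanishing doubly at all points of `S`. -/
def h0 (n d : ℕ) (S : Finset (ProjSpace k n)) : ℕ :=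
  Module.finrank k
    ↥(homogeneousSubmodule (Fin (n+1)) k d ⊓ ⨅ p ∈ S, doubleVanishing k p.rep)

/-- `h^1(I_{2S}(d)) = h^0(I_{2S}(d)) + (n+1)#S - C(n+d,n)`. -/
def h1 (n d : ℕ) (S : Finset (ProjSpace k n)) : ℤ :=
  (h0 k n d S : ℤ) + (n+1) * S.card - (n+d).choose n

/-- `S` spans `P^n`: it is contained in no hyperplane. -/
def Spans (n : ℕ) (S : Finset (ProjSpace k n)) : Prop :=
  Submodule.span k (Projectivization.rep '' (S : Set (ProjSpace k n))) = ⊤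

/-- The Terracini locus `T(n,d;x)`. -/
def Terracini (n d x : ℕ) : Set (Finset (ProjSpace k n)) :=
  {S | S.card = x ∧ Spans k n S ∧ 0 < h0 k n d S ∧ 0 < h1 k n d S}

/-- The minimally Terracini locus `T(n,d;x)'`. -/
def minTerracini (n d x : ℕ) : Set (Finset (ProjSpace k n)) :=
  {S | S ∈ Terracini k n d x ∧ ∀ A : Finset (ProjSpace k n), A ⊂ S → h1 k n d A = 0}

end

/-- The zero locus in `P^n` of a (homogeneous) polynomial `q`. -/
def projZeroLocus (k : Type*) [Field k] (n : ℕ) (q : MvPolynomial (Fin (n+1)) k) :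
    Set (ProjSpace k n) :=
  {p | MvPolynomial.eval (Projectivization.rep p) q = 0}

/-- `q` defines a smooth plane curve of degree `e` in `P^2`: `q` is a nonzero homogeneous
form of degree `e` and at no point of its zero locus do all partial derivatives vanish. -/
def IsSmoothPlaneCurve (k : Type*) [Field k] (e : ℕ) (q : MvPolynomial (Fin 3) k) : Prop :=
  q ≠ 0 ∧ q ∈ MvPolynomial.homogeneousSubmodule (Fin 3) k e ∧
    ∀ v : Fin 3 → k, v ≠ 0 → MvPolynomial.eval v q = 0 →
      ∃ i, MvPolynomial.eval v (MvPolynomial.pderiv i q) ≠ 0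

/-!
Let `S` be the transversal intersection of plane curves `c`, `g` of degrees `a ≤ b`, and put
`s = a + b - 3`. A functional on the coordinate ring of `S` that kills all forms of degree `s` is
determined by its values on forms of degree `s + 1`, where it factors through a one-dimensional
quotient; it is therefore zero or generates the dual of the coordinate ring. This is the
Cayley–Bacharach property: a linear relation, in degree at least `s`, among the evaluations at the
points of `S` is trivial as soon as one of its coefficients vanishes.

Hence a proper subset of `S` imposes independent conditions on forms of degree `≥ s`. Testing a
relation among gradients of forms of degree `d = a + 2b - 3` on multiples of `c` and of `g` shows
that the coefficient vector at each point is a multiple of the point itself, and Euler's formula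
reduces such a relation to one among evaluations. So proper subsets have `h¹ = 0`.

For `S` itself, the forms `c * F` with `F` of degree `2b - 3` vanishing on `S`, together with
`g ^ 2 * G` with `G` of degree `a - 3`, span a space of doubly vanishing forms whose dimension
exceeds the expected one.
-/

section Homogeneous

variable {σ R : Type*} [CommRing R]

lemma eval_smul_of_isHomogeneous {m : ℕ} {F : MvPolynomial σ R} (hF : F.IsHomogeneous m)
    (t : R) (v : σ → R) : eval (t • v) F = t ^ m * eval v F := by
  rw [eval_eq, eval_eq, Finset.mul_sum]
  refine Finset.sum_congr rfl fun s hs => ?_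
  have hdeg : ∑ i ∈ s.support, s i = m := (hF.degree_eq_sum_deg_support hs).symm
  simp only [Pi.smul_apply, smul_eq_mul, mul_pow, Finset.prod_mul_distrib,
    Finset.prod_pow_eq_pow_sum, hdeg]
  ring

lemma eval_single_one_of_isHomogeneous [DecidableEq σ] {m : ℕ} {F : MvPolynomial σ R}
    (hF : F.IsHomogeneous m) (i : σ) :
    eval (Pi.single i 1) F = coeff (Finsupp.single i m) F := by
  rw [eval_eq, Finset.sum_eq_single (Finsupp.single i m)]
  · rw [Finset.prod_eq_one fun j hj => ?_, mul_one]
    rw [Finset.mem_singleton.mp (Finsupp.support_single_subset hj), Pi.single_eq_same, one_pow]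
  · intro s hs hne
    obtain ⟨j, hjs, hji⟩ : ∃ j ∈ s.support, j ≠ i := by
      by_contra! hsupp
      obtain ⟨n, rfl⟩ := Finsupp.support_subset_singleton'.mp
        fun j hj => Finset.mem_singleton.mpr (hsupp j hj)
      have hdeg : n = m := by
        by_contra hnm
        exact mem_support_iff.mp hs (hF.coeff_eq_zero (by simpa using hnm))
      exact hne (hdeg ▸ rfl)
    rw [Finset.prod_eq_zero hjs, mul_zero]
    rw [Pi.single_eq_of_ne hji, zero_pow (Finsupp.mem_support_iff.mp hjs)]
  · intro hs
    rw [notMem_support_iff.mp hs, zero_mul]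

lemma isHomogeneous_of_X_mul {m : ℕ} {i : σ} {G : MvPolynomial σ R}
    (h : (X i * G).IsHomogeneous (m + 1)) : G.IsHomogeneous m := by
  intro s hs
  have hdeg := h (d := Finsupp.single i 1 + s) (by rwa [coeff_X_mul])
  rw [map_add, Finsupp.weight_single] at hdeg
  simpa [add_comm 1] using hdeg

lemma eq_zero_of_isHomogeneous_X_mul_zero {i : σ} {G : MvPolynomial σ R}
    (h : (X i * G).IsHomogeneous 0) : G = 0 := by
  ext s
  rw [← coeff_X_mul s i G, h.coeff_eq_zero (by simp), coeff_zero]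

end Homogeneous

section LineRestriction

variable {k : Type*} [Field k]

/-- Restriction of a ternary form to the line `X 2 = 0`, written in the affine coordinate
`X 0 / X 1` of that line. -/
noncomputable def lineRestriction : MvPolynomial (Fin 3) k →ₐ[k] Polynomial k :=
  aeval ![Polynomial.X, 1, 0]

lemma eval_lineRestriction (F : MvPolynomial (Fin 3) k) (s : k) :
    (lineRestriction F).eval s = eval ![s, 1, 0] F := by
  rw [lineRestriction, ← Polynomial.coe_evalRingHom, ← AlgHom.coe_toRingHom, ← RingHom.comp_apply]
  congr 1
  ext i
  · simp
  · fin_cases i <;> simp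

lemma lineRestriction_eq_sum (F : MvPolynomial (Fin 3) k) :
    lineRestriction F = ∑ s ∈ F.support,
      Polynomial.C (coeff s F) * (Polynomial.X ^ s 0 * 0 ^ s 2) := by
  simp [lineRestriction, aeval_def, eval₂_eq', Fin.prod_univ_three]

variable {i : ℕ} {F : MvPolynomial (Fin 3) k}

lemma sum_apply_eq_of_mem_support (hF : F.IsHomogeneous i) {s : Fin 3 →₀ ℕ}
    (hs : s ∈ F.support) : s 0 + s 1 + s 2 = i := by
  have hdeg : s.degree = i := by
    by_contra hne
    exact mem_support_iff.mp hs (hF.coeff_eq_zero hne)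
  rw [← hdeg, Finsupp.degree_eq_sum, Fin.sum_univ_three]

lemma natDegree_lineRestriction_le (hF : F.IsHomogeneous i) :
    (lineRestriction F).natDegree ≤ i := by
  rw [lineRestriction_eq_sum]
  refine Polynomial.natDegree_sum_le_of_forall_le _ _ fun s hs => ?_
  have hsum := sum_apply_eq_of_mem_support hF hs
  rcases eq_or_ne (s 2) 0 with h2 | h2
  · rw [h2, pow_zero, mul_one]
    exact (Polynomial.natDegree_C_mul_X_pow_le _ _).trans (by lia)
  · simp [h2]

lemma coeff_lineRestriction (hF : F.IsHomogeneous i) {s : Fin 3 →₀ ℕ} (hs2 : s 2 = 0)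
    (hs : s.degree = i) : (lineRestriction F).coeff (s 0) = coeff s F := by
  rw [Finsupp.degree_eq_sum, Fin.sum_univ_three] at hs
  rw [lineRestriction_eq_sum, Polynomial.finsetSum_coeff, Finset.sum_eq_single s]
  · simp [hs2]
  · intro t ht hts
    have hsum := sum_apply_eq_of_mem_support hF ht
    rcases eq_or_ne (t 2) 0 with h2 | h2
    · have h0 : s 0 ≠ t 0 := fun h0 => hts <| by
        ext j
        fin_cases j <;> simp <;> lia
      simp [h2, Polynomial.coeff_X_pow, h0]
    · simp [h2]
  · intro hs
    simp [notMem_support_iff.mp hs]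

lemma X_dvd_of_lineRestriction_eq_zero (hF : F.IsHomogeneous i) (h0 : lineRestriction F = 0) :
    X 2 ∣ F := by
  rw [X_dvd_iff_modMonomial_eq_zero]
  ext s
  by_cases hs : Finsupp.single 2 1 ≤ s
  · rw [coeff_modMonomial_of_le _ hs, coeff_zero]
  · rw [coeff_modMonomial_of_not_le _ hs, coeff_zero]
    have hs2 : s 2 = 0 := by
      rw [Finsupp.single_le_iff] at hs
      lia
    by_cases hdeg : s.degree = i
    · rw [← coeff_lineRestriction hF hs2 hdeg, h0, Polynomial.coeff_zero]
    · exact hF.coeff_eq_zero hdeg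

lemma degree_lineRestriction_eq (hF : F.IsHomogeneous i) (he : eval (Pi.single 0 1) F ≠ 0) :
    (lineRestriction F).degree = i := by
  refine Polynomial.degree_eq_of_le_of_coeff_ne_zero
    (Polynomial.natDegree_le_iff_degree_le.mp (natDegree_lineRestriction_le hF)) ?_
  have hcoeff := coeff_lineRestriction hF (s := Finsupp.single 0 i) (by simp) (by simp)
  rw [Finsupp.single_eq_same] at hcoeff
  rwa [hcoeff, ← eval_single_one_of_isHomogeneous hF]

lemma exists_isHomogeneous_lineRestriction_eq {h : Polynomial k} (hh : h.natDegree ≤ i) :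
    ∃ F : MvPolynomial (Fin 3) k, F.IsHomogeneous i ∧ lineRestriction F = h := by
  refine ⟨∑ j ∈ Finset.range (i + 1), C (h.coeff j) * (X 0 ^ j * X 1 ^ (i - j)),
    IsHomogeneous.sum _ _ _ fun j hj => IsHomogeneous.C_mul ?_ _, ?_⟩
  · have hmul := (isHomogeneous_X_pow (R := k) (0 : Fin 3) j).mul
      (isHomogeneous_X_pow (1 : Fin 3) (i - j))
    rwa [Nat.add_sub_cancel' (Nat.lt_succ_iff.mp (Finset.mem_range.mp hj))] at hmul
  · conv_rhs => rw [h.as_sum_range_C_mul_X_pow' (n := i + 1) (by lia)]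
    simp [lineRestriction]

lemma exists_isHomogeneous_mul_lineRestriction_eq {b : ℕ} {g : MvPolynomial (Fin 3) k}
    (hg : g.IsHomogeneous b) {r : Polynomial k} (hr : r.degree < (i + 1 - b : ℕ)) :
    ∃ B : MvPolynomial (Fin 3) k, (B * g).IsHomogeneous i ∧ lineRestriction B = r := by
  rcases eq_or_ne r 0 with rfl | hr0
  · exact ⟨0, by simpa using isHomogeneous_zero _ _ _, map_zero _⟩
  · rw [Polynomial.degree_eq_natDegree hr0, Nat.cast_lt] at hr
    obtain ⟨B, hB, hBr⟩ := exists_isHomogeneous_lineRestriction_eq (i := i - b) (h := r) (by lia)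
    exact ⟨B, (show i - b + b = i by lia) ▸ hB.mul hg, hBr⟩

end LineRestriction

section AffineIdeal

variable {k : Type*} [Field k]

lemma exists_degree_lt_dvd_sub_mul {P Q : Polynomial k} (hPQ : IsCoprime P Q) (hP : P ≠ 0)
    (f : Polynomial k) : ∃ r : Polynomial k, r.degree < P.degree ∧ P ∣ f - r * Q := by
  obtain ⟨u, w, huw⟩ := hPQ
  refine ⟨f * w % P, Polynomial.degree_mod_lt _ hP, f * u + f * w / P * Q, ?_⟩
  linear_combination (-f) * huw - Q * EuclideanDomain.mod_add_div (f * w) P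

/-- The ideal, in homogeneous coordinates, of the intersection of `c = 0` and `g = 0` with the
affine chart `X 2 = 1`. -/
noncomputable def affineIdeal (c g : MvPolynomial (Fin 3) k) : Ideal (MvPolynomial (Fin 3) k) :=
  Ideal.span {c, g, X 2 - 1}

variable {a b i s : ℕ} {c g F u : MvPolynomial (Fin 3) k} {r : Polynomial k}

lemma mul_left_mem_affineIdeal (A : MvPolynomial (Fin 3) k) : A * c ∈ affineIdeal c g :=
  Ideal.mul_mem_left _ _ (Ideal.subset_span (by simp))

lemma mul_right_mem_affineIdeal (B : MvPolynomial (Fin 3) k) : B * g ∈ affineIdeal c g :=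
  Ideal.mul_mem_left _ _ (Ideal.subset_span (by simp))

lemma X_mul_sub_mem_affineIdeal (F : MvPolynomial (Fin 3) k) : X 2 * F - F ∈ affineIdeal c g := by
  rw [show X 2 * F - F = F * (X 2 - 1) by ring]
  exact Ideal.mul_mem_left _ _ (Ideal.subset_span (by simp))

lemma eval_eq_zero_of_mem_affineIdeal {v : Fin 3 → k} (hc : eval v c = 0) (hg : eval v g = 0)
    (hv : v 2 = 1) (hF : F ∈ affineIdeal c g) : eval v F = 0 := by
  have hle : affineIdeal c g ≤ RingHom.ker (eval v) := by
    rw [affineIdeal, Ideal.span_le]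
    rintro _ (rfl | rfl | rfl) <;> simp [RingHom.mem_ker, *]
  exact hle hF

lemma exists_isHomogeneous_sub_mem_affineIdeal (hc : c.IsHomogeneous a)
    (hca : (lineRestriction c).degree = a) (hg : g.IsHomogeneous b) (hu : u.IsHomogeneous i)
    (hr : r.degree < (i + 1 - b : ℕ))
    (hdvd : lineRestriction c ∣ lineRestriction u - r * lineRestriction g) :
    ∃ u' : MvPolynomial (Fin 3) k, u'.IsHomogeneous (i - 1) ∧ (i = 0 → u' = 0) ∧
      u - u' ∈ affineIdeal c g := by
  obtain ⟨q, hq⟩ := hdvd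
  obtain ⟨B, hBg, hBr⟩ := exists_isHomogeneous_mul_lineRestriction_eq hg hr
  have hq_degree : q.degree < (i + 1 - a : ℕ) := by
    rcases eq_or_ne q 0 with rfl | hq0
    · exact Polynomial.degree_zero.trans_lt (WithBot.bot_lt_coe _)
    have hle := natDegree_lineRestriction_le (hu.sub hBg)
    have hc0 := Polynomial.ne_zero_of_coe_le_degree hca.ge
    rw [map_sub, map_mul, hBr, hq, Polynomial.natDegree_mul hc0 hq0,
      Polynomial.natDegree_eq_of_degree_eq_some hca] at hle
    rw [Polynomial.degree_eq_natDegree hq0, Nat.cast_lt]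
    lia
  obtain ⟨A, hAc, hAq⟩ := exists_isHomogeneous_mul_lineRestriction_eq hc hq_degree
  have hrest := (hu.sub hBg).sub hAc
  obtain ⟨u', hu'⟩ := X_dvd_of_lineRestriction_eq_zero hrest <| by
    rw [map_sub, map_sub, map_mul, map_mul, hBr, hq, hAq]
    ring
  rw [hu'] at hrest
  refine ⟨u', ?_, ?_, ?_⟩
  · cases i with
    | zero => exact eq_zero_of_isHomogeneous_X_mul_zero hrest ▸ isHomogeneous_zero _ _ _
    | succ j => exact isHomogeneous_of_X_mul hrest
  · rintro rfl
    exact eq_zero_of_isHomogeneous_X_mul_zero hrest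
  · have hsplit : u - u' = A * c + B * g + (X 2 * u' - u') := by
      linear_combination hu'
    rw [hsplit]
    exact add_mem (add_mem (mul_left_mem_affineIdeal A) (mul_right_mem_affineIdeal B))
      (X_mul_sub_mem_affineIdeal u')

section Functional

variable {L : MvPolynomial (Fin 3) k →ₗ[k] k}

lemma map_eq_of_sub_mem_affineIdeal (hL : ∀ F ∈ affineIdeal c g, L F = 0)
    (h : F - u ∈ affineIdeal c g) : L F = L u :=
  sub_eq_zero.mp (by rw [← map_sub, hL _ h])

lemma map_X_pow_mul (hL : ∀ F ∈ affineIdeal c g, L F = 0) (m : ℕ) (F : MvPolynomial (Fin 3) k) :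
    L (X 2 ^ m * F) = L F := by
  induction m with
  | zero => rw [pow_zero, one_mul]
  | succ m ih =>
    rw [pow_succ', mul_assoc, map_eq_of_sub_mem_affineIdeal hL (X_mul_sub_mem_affineIdeal _), ih]

variable (hc : c.IsHomogeneous a) (hca : (lineRestriction c).degree = a) (hg : g.IsHomogeneous b)
  (hs : a + b = s + 3) (hL : ∀ F ∈ affineIdeal c g, L F = 0)

include hc hca hg hs hL

lemma map_eq_zero_of_coeff_eq_zero (hLs : ∀ F : MvPolynomial (Fin 3) k, F.IsHomogeneous s → L F = 0)
    (hF : F.IsHomogeneous (s + 1)) (hr : r.degree < a)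
    (hdvd : lineRestriction c ∣ lineRestriction F - r * lineRestriction g)
    (hr0 : r.coeff (a - 1) = 0) : L F = 0 := by
  have hr' : r.degree < (s + 1 + 1 - b : ℕ) := by
    rw [Polynomial.degree_lt_iff_coeff_zero] at hr ⊢
    intro j hj
    rcases (show j = a - 1 ∨ a ≤ j by lia) with rfl | h
    exacts [hr0, hr j h]
  obtain ⟨F', hF', -, hmem⟩ := exists_isHomogeneous_sub_mem_affineIdeal hc hca hg hF hr' hdvd
  rw [map_eq_of_sub_mem_affineIdeal hL hmem, hLs F' hF']

variable (hcop : IsCoprime (lineRestriction c) (lineRestriction g))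

include hcop

lemma map_isHomogeneous_eq_zero_of_coeff_ne_zero
    (hLs : ∀ F : MvPolynomial (Fin 3) k, F.IsHomogeneous s → L F = 0)
    (hF : F.IsHomogeneous (s + 1)) (hr : r.degree < a)
    (hdvd : lineRestriction c ∣ lineRestriction F - r * lineRestriction g)
    (hr0 : r.coeff (a - 1) ≠ 0) (hLF : L F = 0) (hu : u.IsHomogeneous (s + 1)) : L u = 0 := by
  have hc0 := Polynomial.ne_zero_of_coe_le_degree hca.ge
  obtain ⟨t, ht, htdvd⟩ := exists_degree_lt_dvd_sub_mul hcop hc0 (lineRestriction u)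
  rw [hca] at ht
  have hzero : L (r.coeff (a - 1) • u - t.coeff (a - 1) • F) = 0 := by
    refine map_eq_zero_of_coeff_eq_zero hc hca hg hs hL hLs
      (r := r.coeff (a - 1) • t - t.coeff (a - 1) • r)
      (((homogeneousSubmodule (Fin 3) k (s + 1)).smul_mem _ hu).sub
        ((homogeneousSubmodule (Fin 3) k (s + 1)).smul_mem _ hF)) ?_ ?_ ?_
    · rw [← Polynomial.mem_degreeLT] at hr ht ⊢
      exact sub_mem (Submodule.smul_mem _ _ ht) (Submodule.smul_mem _ _ hr)
    · convert (htdvd.mul_left (Polynomial.C (r.coeff (a - 1)))).sub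
        (hdvd.mul_left (Polynomial.C (t.coeff (a - 1)))) using 1
      simp only [map_sub, map_smul, Polynomial.smul_eq_C_mul]
      ring
    · simp [mul_comm]
  simpa [hLF, hr0] using hzero

lemma functional_eq_zero_of_forall_isHomogeneous_eq_zero
    (hLtop : ∀ F : MvPolynomial (Fin 3) k, F.IsHomogeneous (s + 1) → L F = 0) : L = 0 := by
  have hc0 := Polynomial.ne_zero_of_coe_le_degree hca.ge
  have hge : ∀ m, s + 1 ≤ m → ∀ F : MvPolynomial (Fin 3) k, F.IsHomogeneous m → L F = 0 := by
    intro m hm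
    induction m, hm using Nat.le_induction with
    | base => exact hLtop
    | succ m hm ih =>
      intro F hF
      obtain ⟨r, hr, hdvd⟩ := exists_degree_lt_dvd_sub_mul hcop hc0 (lineRestriction F)
      rw [hca] at hr
      obtain ⟨F', hF', -, hmem⟩ := exists_isHomogeneous_sub_mem_affineIdeal hc hca hg hF
        (hr.trans_le (Nat.cast_le.mpr (by lia))) hdvd
      rw [map_eq_of_sub_mem_affineIdeal hL hmem, ih F' hF']
  refine LinearMap.ext fun F => ?_
  rw [← F.sum_homogeneousComponent, map_sum]
  refine Finset.sum_eq_zero fun m _ => ?_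
  rw [← map_X_pow_mul hL (s + 1)]
  exact hge (s + 1 + m) (by lia) _
    ((isHomogeneous_X_pow 2 (s + 1)).mul (homogeneousComponent_isHomogeneous m F))

lemma degree_lt_of_forall_map_mul_eq_zero
    (hLs : ∀ F : MvPolynomial (Fin 3) k, F.IsHomogeneous s → L F = 0) (hL0 : L ≠ 0)
    (hu : u.IsHomogeneous i) (hLu : ∀ V, L (u * V) = 0) (hr : r.degree < a)
    (hdvd : lineRestriction c ∣ lineRestriction u - r * lineRestriction g) :
    r.degree < (i + 1 - b : ℕ) := by
  rcases eq_or_ne r 0 with rfl | hr0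
  · exact Polynomial.degree_zero.trans_lt (WithBot.bot_lt_coe _)
  rw [Polynomial.degree_eq_natDegree hr0, Nat.cast_lt] at hr ⊢
  by_contra! hn
  set e₀ := a - 1 - r.natDegree
  set e₁ := s + 1 - i - e₀
  refine hL0 <| functional_eq_zero_of_forall_isHomogeneous_eq_zero hc hca hg hs hL hcop
    fun F hF => ?_
  refine map_isHomogeneous_eq_zero_of_coeff_ne_zero hc hca hg hs hL hcop hLs
    (F := u * (X 0 ^ e₀ * X 1 ^ e₁)) (r := r * Polynomial.X ^ e₀) ?_ ?_ ?_ ?_ (hLu _) hF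
  · have hdeg : i + (e₀ + e₁) = s + 1 := by lia
    exact hdeg ▸ hu.mul ((isHomogeneous_X_pow 0 e₀).mul (isHomogeneous_X_pow 1 e₁))
  · rw [Polynomial.degree_mul, Polynomial.degree_X_pow, Polynomial.degree_eq_natDegree hr0]
    norm_cast
    lia
  · have hres : lineRestriction (u * (X 0 ^ e₀ * X 1 ^ e₁)) - r * Polynomial.X ^ e₀ *
        lineRestriction g = (lineRestriction u - r * lineRestriction g) * Polynomial.X ^ e₀ := by
      simp only [lineRestriction, map_mul, map_pow, aeval_X, Matrix.cons_val_zero,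
        Matrix.cons_val_one, one_pow]
      ring
    exact hres ▸ hdvd.mul_right _
  · rw [show a - 1 = r.natDegree + e₀ by lia, Polynomial.coeff_mul_X_pow]
    exact Polynomial.leadingCoeff_ne_zero.mpr hr0

theorem mem_affineIdeal_of_forall_map_mul_eq_zero
    (hLs : ∀ F : MvPolynomial (Fin 3) k, F.IsHomogeneous s → L F = 0) (hL0 : L ≠ 0)
    (hu : u.IsHomogeneous i) (hLu : ∀ V, L (u * V) = 0) : u ∈ affineIdeal c g := by
  have hc0 := Polynomial.ne_zero_of_coe_le_degree hca.ge
  induction i using Nat.strong_induction_on generalizing u with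
  | _ i ih =>
    obtain ⟨r, hr, hdvd⟩ := exists_degree_lt_dvd_sub_mul hcop hc0 (lineRestriction u)
    obtain ⟨u', hu', hu'0, hmem⟩ := exists_isHomogeneous_sub_mem_affineIdeal hc hca hg hu
      (degree_lt_of_forall_map_mul_eq_zero hc hca hg hs hL hcop hLs hL0 hu hLu (hca ▸ hr) hdvd) hdvd
    have hLu' : ∀ V, L (u' * V) = 0 := fun V => by
      rw [← hLu V, ← map_eq_of_sub_mem_affineIdeal hL]
      rw [← sub_mul]
      exact Ideal.mul_mem_right V _ hmem
    have hu'_mem : u' ∈ affineIdeal c g := by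
      rcases eq_or_ne i 0 with hi | hi
      · exact hu'0 hi ▸ zero_mem _
      · exact ih (i - 1) (by lia) hu' hLu'
    exact sub_add_cancel u u' ▸ add_mem hmem hu'_mem

end Functional

end AffineIdeal

section AffinePoints

variable {k ι : Type*} [Field k] {S : Finset ι} {v : ι → Fin 3 → k}

lemma exists_isHomogeneous_eval_ne_zero (hv : ∀ p ∈ S, v p 2 = 1) (hinj : Set.InjOn v S) {q : ι}
    (hq : q ∈ S) : ∃ m, ∃ u : MvPolynomial (Fin 3) k, u.IsHomogeneous m ∧ eval (v q) u ≠ 0 ∧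
      ∀ p ∈ S, p ≠ q → eval (v p) u = 0 := by
  classical
  have hcoord : ∀ p, ∃ j, p ∈ S.erase q → v p j ≠ v q j := fun p => by
    by_cases hp : p ∈ S.erase q
    · obtain ⟨hpq, hpS⟩ := Finset.mem_erase.mp hp
      obtain ⟨j, hj⟩ := Function.ne_iff.mp (hinj.ne hpS hq hpq)
      exact ⟨j, fun _ => hj⟩
    · exact ⟨0, fun h => absurd h hp⟩
  choose j hj using hcoord
  refine ⟨_, ∏ p ∈ S.erase q, (X (j p) - C (v p (j p)) * X 2),
    IsHomogeneous.prod _ _ (fun _ => 1) fun p _ =>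
      (isHomogeneous_X _ _).sub (isHomogeneous_C_mul_X _ _), ?_, fun p hp hpq => ?_⟩
  · rw [map_prod, Finset.prod_ne_zero_iff]
    intro p hp
    simpa [hv q hq, sub_ne_zero] using (hj p hp).symm
  · rw [map_prod]
    exact Finset.prod_eq_zero (Finset.mem_erase.mpr ⟨hpq, hp⟩) (by simp [hv p hp])

-- Were the functional `∑ β q • eval (v q)` nonzero, the form isolating the point `p` with `β p = 0`
-- would lie in its radical, hence in the ideal of the intersection, and so would vanish at `p`.
theorem affine_cayleyBacharach {a b s m : ℕ} {c g : MvPolynomial (Fin 3) k}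
    (hc : c.IsHomogeneous a) (hca : (lineRestriction c).degree = a) (hg : g.IsHomogeneous b)
    (hs : a + b = s + 3) (hcop : IsCoprime (lineRestriction c) (lineRestriction g))
    (hv : ∀ p ∈ S, v p 2 = 1) (hinj : Set.InjOn v S) (hvc : ∀ p ∈ S, eval (v p) c = 0)
    (hvg : ∀ p ∈ S, eval (v p) g = 0) (hsm : s ≤ m) {β : ι → k}
    (hβ : ∀ F : MvPolynomial (Fin 3) k, F.IsHomogeneous m → ∑ p ∈ S, β p * eval (v p) F = 0)
    {p : ι} (hp : p ∈ S) (hβp : β p = 0) : ∀ q ∈ S, β q = 0 := by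
  obtain ⟨L, L_apply⟩ : ∃ L : MvPolynomial (Fin 3) k →ₗ[k] k,
      ∀ F, L F = ∑ q ∈ S, β q * eval (v q) F :=
    ⟨∑ q ∈ S, β q • evalLM k (v q), fun F => by simp [evalLM, aeval_eq_eval]⟩
  have L_eq_single : ∀ q ∈ S, ∀ F, (∀ r ∈ S, r ≠ q → eval (v r) F = 0) →
      L F = β q * eval (v q) F := fun q hq F hF => by
    rw [L_apply, Finset.sum_eq_single_of_mem q hq]
    intro r hr hrq
    rw [hF r hr hrq, mul_zero]
  have hL : ∀ F ∈ affineIdeal c g, L F = 0 := fun F hF => by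
    rw [L_apply]
    refine Finset.sum_eq_zero fun q hq => ?_
    rw [eval_eq_zero_of_mem_affineIdeal (hvc q hq) (hvg q hq) (hv q hq) hF, mul_zero]
  have hLs : ∀ F : MvPolynomial (Fin 3) k, F.IsHomogeneous s → L F = 0 := fun F hF => by
    have hmul := (isHomogeneous_X_pow (2 : Fin 3) (m - s)).mul hF
    rw [Nat.sub_add_cancel hsm] at hmul
    rw [← map_X_pow_mul hL (m - s), L_apply, hβ _ hmul]
  have hL0 : L = 0 := by
    by_contra hL0
    obtain ⟨i, u, hu, hup, hu0⟩ := exists_isHomogeneous_eval_ne_zero hv hinj hp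
    refine hup (eval_eq_zero_of_mem_affineIdeal (hvc p hp) (hvg p hp) (hv p hp)
      (mem_affineIdeal_of_forall_map_mul_eq_zero hc hca hg hs hL hcop hLs hL0 hu fun V => ?_))
    rw [L_eq_single p hp _ fun r hr hrp => by rw [map_mul, hu0 r hr hrp, zero_mul], hβp, zero_mul]
  intro q hq
  obtain ⟨-, u, -, huq, hu0⟩ := exists_isHomogeneous_eval_ne_zero hv hinj hq
  refine (mul_eq_zero.mp ?_).resolve_right huq
  rw [← L_eq_single q hq u hu0, hL0, LinearMap.zero_apply]

end AffinePoints

section LinearSubstitution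

variable {k : Type*} [Field k] {n : ℕ}

/-- Composition of a polynomial function with a linear endomorphism of `k ^ n`. -/
noncomputable def linearSubst (E : (Fin n → k) →ₗ[k] (Fin n → k)) :
    MvPolynomial (Fin n) k →ₐ[k] MvPolynomial (Fin n) k :=
  bind₁ (LinearMap.toMatrix' E).toMvPolynomial

lemma isHomogeneous_linearSubst (E : (Fin n → k) →ₗ[k] (Fin n → k)) {m : ℕ}
    {F : MvPolynomial (Fin n) k} (hF : F.IsHomogeneous m) : (linearSubst E F).IsHomogeneous m := by
  simpa only [linearSubst, bind₁, one_mul] using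
    hF.aeval _ (Matrix.toMvPolynomial_isHomogeneous (LinearMap.toMatrix' E))

lemma eval_linearSubst (E : (Fin n → k) →ₗ[k] (Fin n → k)) (F : MvPolynomial (Fin n) k)
    (x : Fin n → k) : eval x (linearSubst E F) = eval (E x) F := by
  rw [linearSubst, ← aeval_eq_eval, aeval_bind₁, aeval_eq_eval]
  simp only [aeval_eq_eval, Matrix.toMvPolynomial_eval_eq_apply, LinearMap.toMatrix'_mulVec]

lemma exists_linearEquiv_apply_eq_single_apply_two_eq {w : Fin 3 → k} (hw : w ≠ 0)
    {l : Module.Dual k (Fin 3 → k)} (hl : l ≠ 0) (hlw : l w = 0) :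
    ∃ E : (Fin 3 → k) ≃ₗ[k] (Fin 3 → k), E w = Pi.single 0 1 ∧ ∀ x, E x 2 = l x := by
  obtain ⟨w₂, hlw₂, hw₂⟩ : ∃ w₂ ∈ LinearMap.ker l, w₂ ∉ k ∙ w := by
    refine SetLike.exists_of_lt (Submodule.lt_of_le_of_finrank_lt_finrank ?_ ?_)
    · rwa [Submodule.span_singleton_le_iff_mem]
    · have hker := Module.Dual.finrank_ker_add_one_of_ne_zero hl
      rw [Module.finrank_fin_fun] at hker
      rw [finrank_span_singleton hw]
      lia
  obtain ⟨w₃, hlw₃⟩ := LinearMap.surjective hl 1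
  have hli : LinearIndependent k ![w, w₂, w₃] := by
    rw [LinearMap.mem_ker] at hlw₂
    rw [Fintype.linearIndependent_iff]
    intro t ht
    have ht2 : t 2 = 0 := by simpa [Fin.sum_univ_three, hlw, hlw₂, hlw₃] using congrArg l ht
    simp only [Fin.sum_univ_three, ht2, Matrix.cons_val, zero_smul, add_zero] at ht
    have ht1 : t 1 = 0 := by
      by_contra ht1
      refine hw₂ (Submodule.mem_span_singleton.mpr ⟨-(t 1)⁻¹ * t 0, ?_⟩)
      rw [mul_smul, neg_smul, ← smul_neg, ← eq_neg_of_add_eq_zero_right ht, inv_smul_smul₀ ht1]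
    have ht0 : t 0 = 0 := by simpa [ht1, hw] using ht
    intro i
    fin_cases i <;> assumption
  let B := basisOfLinearIndependentOfCardEqFinrank hli (by simp)
  refine ⟨B.equivFun, ?_, fun x => ?_⟩
  · rw [show w = B 0 by simp [B]]
    ext i
    simp [Pi.single_apply, eq_comm]
  · conv_rhs => rw [← B.sum_equivFun x]
    simp_all [Fin.sum_univ_three, B]

end LinearSubstitution

section CayleyBacharach

variable {k : Type*} [Field k]

lemma mk_mem_projZeroLocus_iff {n m : ℕ} {F : MvPolynomial (Fin (n + 1)) k}
    (hF : F.IsHomogeneous m) {v : Fin (n + 1) → k} (hv : v ≠ 0) :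
    Projectivization.mk k v hv ∈ projZeroLocus k n F ↔ eval v F = 0 := by
  obtain ⟨t, ht⟩ := Projectivization.exists_smul_eq_mk_rep k v hv
  rw [projZeroLocus, Set.mem_ofPred_eq, ← ht, Units.smul_def, eval_smul_of_isHomogeneous hF,
    mul_eq_zero, or_iff_right (pow_ne_zero m t.ne_zero)]

lemma exists_dual_apply_eq_zero_forall_apply_ne_zero [Infinite k] {V ι : Type*} [AddCommGroup V]
    [Module k V] [Finite ι] {w : V} {x : ι → V} (hx : ∀ i, x i ∉ k ∙ w) :
    ∃ l : Module.Dual k V, l w = 0 ∧ ∀ i, l (x i) ≠ 0 := by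
  refine Module.Dual.exists_forall_mem_ne_zero_of_forall_exists
    (LinearMap.ker (Module.Dual.eval k V w)) (fun i => Module.Dual.eval k V (x i)) fun i => ?_
  obtain ⟨l, hlx, hlw⟩ := Submodule.exists_le_ker_of_notMem (hx i)
  exact ⟨l, hlw (Submodule.mem_span_singleton_self w), hlx⟩

lemma injOn_inv_smul_apply_rep {n : ℕ} {S : Set (ProjSpace k n)} {i : Fin (n + 1)}
    {E : (Fin (n + 1) → k) ≃ₗ[k] (Fin (n + 1) → k)} (hE : ∀ q ∈ S, E q.rep i ≠ 0) :
    Set.InjOn (fun q : ProjSpace k n => (E q.rep i)⁻¹ • E q.rep) S := by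
  intro q hq q' _ h
  have hrep : (E q.rep i)⁻¹ • q.rep = (E q'.rep i)⁻¹ • q'.rep := E.injective (by simpa using h)
  rw [← q.mk_rep, ← q'.mk_rep, Projectivization.mk_eq_mk_iff']
  refine ⟨E q.rep i * (E q'.rep i)⁻¹, ?_⟩
  rw [mul_smul, ← hrep, smul_inv_smul₀ (hE q hq)]

lemma isCoprime_lineRestriction [IsAlgClosed k] {c g : MvPolynomial (Fin 3) k}
    (h : ∀ v : Fin 3 → k, v ≠ 0 → v 2 = 0 → eval v c = 0 → eval v g ≠ 0) :
    IsCoprime (lineRestriction c) (lineRestriction g) := by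
  rw [Polynomial.isCoprime_iff_aeval_ne_zero_of_isAlgClosed k k]
  intro t
  simp only [Polynomial.coe_aeval_eq_eval, eval_lineRestriction]
  have hne : ![t, 1, 0] ≠ 0 := fun h0 => by simpa using congrFun h0 1
  exact or_iff_not_imp_left.mpr fun hct => h _ hne rfl (not_not.mp hct)

lemma exists_linearEquiv_eval_symm_single_ne_zero [Infinite k] {a : ℕ}
    {c : MvPolynomial (Fin 3) k} (hc : c.IsHomogeneous a) (hc0 : c ≠ 0)
    {S : Finset (ProjSpace k 2)} (hS : S.Nonempty) (hSc : ∀ q ∈ S, eval q.rep c = 0) :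
    ∃ E : (Fin 3 → k) ≃ₗ[k] (Fin 3 → k),
      eval (E.symm (Pi.single 0 1)) c ≠ 0 ∧ ∀ q ∈ S, E q.rep 2 ≠ 0 := by
  obtain ⟨w, hw⟩ : ∃ w, eval w c ≠ 0 := by
    by_contra! h
    exact hc0 (funext fun v => by simpa using h v)
  obtain ⟨p, hp⟩ := hS
  have hw0 : w ≠ 0 := by
    rintro rfl
    rw [← zero_smul k p.rep, eval_smul_of_isHomogeneous hc, hSc p hp, mul_zero] at hw
    exact hw rfl
  have hspan : ∀ q : S, q.1.rep ∉ k ∙ w := by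
    rintro ⟨q, hq⟩ hmem
    obtain ⟨t, ht⟩ := Submodule.mem_span_singleton.mp hmem
    have ht0 : t ≠ 0 := fun ht0 => q.rep_nonzero (by rw [← ht, ht0, zero_smul])
    refine mul_ne_zero (pow_ne_zero a ht0) hw ?_
    rw [← eval_smul_of_isHomogeneous hc, ht, hSc q hq]
  obtain ⟨l, hlw, hl⟩ := exists_dual_apply_eq_zero_forall_apply_ne_zero hspan
  have hl0 : l ≠ 0 := fun h => hl ⟨p, hp⟩ (by rw [h, LinearMap.zero_apply])
  obtain ⟨E, hEw, hE2⟩ := exists_linearEquiv_apply_eq_single_apply_two_eq hw0 hl0 hlw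
  exact ⟨E, by rwa [← hEw, E.symm_apply_apply], fun q hq => hE2 q.rep ▸ hl ⟨q, hq⟩⟩

theorem cayleyBacharach [IsAlgClosed k] {a b s m : ℕ} {c g : MvPolynomial (Fin 3) k}
    (hc : c.IsHomogeneous a) (hc0 : c ≠ 0) (hg : g.IsHomogeneous b) (hs : a + b = s + 3)
    {S : Finset (ProjSpace k 2)} (hS : ↑S = projZeroLocus k 2 c ∩ projZeroLocus k 2 g)
    (hsm : s ≤ m) {β : ProjSpace k 2 → k}
    (hβ : ∀ F : MvPolynomial (Fin 3) k, F.IsHomogeneous m → ∑ q ∈ S, β q * eval q.rep F = 0)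
    {p : ProjSpace k 2} (hp : p ∈ S) (hβp : β p = 0) : ∀ q ∈ S, β q = 0 := by
  have hSc : ∀ q ∈ S, eval q.rep c = 0 := fun q hq => (hS.le hq).1
  have hSg : ∀ q ∈ S, eval q.rep g = 0 := fun q hq => (hS.le hq).2
  obtain ⟨E, hEc, hE2⟩ := exists_linearEquiv_eval_symm_single_ne_zero hc hc0 ⟨p, hp⟩ hSc
  have hc' := isHomogeneous_linearSubst E.symm.toLinearMap hc
  have hg' := isHomogeneous_linearSubst E.symm.toLinearMap hg
  have hcop : IsCoprime (lineRestriction (linearSubst E.symm.toLinearMap c))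
      (lineRestriction (linearSubst E.symm.toLinearMap g)) := by
    refine isCoprime_lineRestriction fun v hv hv2 hvc hvg => ?_
    rw [eval_linearSubst, LinearEquiv.coe_coe] at hvc hvg
    have hv' : E.symm v ≠ 0 := by simpa using hv
    have hmem : Projectivization.mk k (E.symm v) hv' ∈ S := hS.ge
      ⟨(mk_mem_projZeroLocus_iff hc hv').mpr hvc, (mk_mem_projZeroLocus_iff hg hv').mpr hvg⟩
    obtain ⟨t, ht⟩ := Projectivization.exists_smul_eq_mk_rep k (E.symm v) hv'
    refine hE2 _ hmem ?_
    rw [← ht, Units.smul_def, map_smul, E.apply_symm_apply, Pi.smul_apply, hv2, smul_zero]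
  have hzero : ∀ q ∈ S, β q * E q.rep 2 ^ m = 0 := by
    refine affine_cayleyBacharach hc' (degree_lineRestriction_eq hc' ?_) hg' hs hcop
      (v := fun q => (E q.rep 2)⁻¹ • E q.rep) (fun q hq => inv_mul_cancel₀ (hE2 q hq))
      (injOn_inv_smul_apply_rep hE2) (fun q hq => ?_) (fun q hq => ?_) hsm (fun F hF => ?_) hp
      (by rw [hβp, zero_mul])
    · rwa [eval_linearSubst]
    · simp [eval_linearSubst, eval_smul_of_isHomogeneous hc, hSc q hq]
    · simp [eval_linearSubst, eval_smul_of_isHomogeneous hg, hSg q hq]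
    · rw [← hβ _ (isHomogeneous_linearSubst E.toLinearMap hF)]
      refine Finset.sum_congr rfl fun q hq => ?_
      rw [eval_smul_of_isHomogeneous hF, eval_linearSubst, LinearEquiv.coe_coe, mul_assoc, inv_pow,
        mul_inv_cancel_left₀ (pow_ne_zero m (hE2 q hq))]
  exact fun q hq => (mul_eq_zero.mp (hzero q hq)).resolve_right (pow_ne_zero m (hE2 q hq))

end CayleyBacharach

section Functionals

variable {k V ι : Type*} [Field k] [AddCommGroup V] [Module k V]

lemma linearIndepOn_domRestrict_iff {W : Submodule k V} {φ : ι → Module.Dual k V} {A : Finset ι} :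
    LinearIndepOn k (fun i => (φ i).domRestrict W) (A : Set ι) ↔
      ∀ β : ι → k, (∀ x ∈ W, ∑ i ∈ A, β i * φ i x = 0) → ∀ i ∈ A, β i = 0 := by
  rw [linearIndepOn_finset_iff]
  simp [LinearMap.ext_iff, LinearMap.sum_apply]

variable (W : Submodule k V) [FiniteDimensional k W] (φ : ι → Module.Dual k V) (A : Finset ι)

lemma finrank_span_domRestrict_add_finrank_inf_iInf_ker :
    Module.finrank k (Submodule.span k ((fun i => (φ i).domRestrict W) '' A)) +
      Module.finrank k ↥(W ⊓ ⨅ i ∈ A, LinearMap.ker (φ i)) = Module.finrank k W := by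
  have hker : Submodule.comap W.subtype (⨅ i ∈ A, LinearMap.ker (φ i)) =
      (Submodule.span k ((fun i => (φ i).domRestrict W) '' A)).dualCoannihilator := by
    refine SetLike.coe_injective ?_
    rw [Submodule.coe_dualCoannihilator_span]
    ext x
    simp
  rw [← Submodule.map_comap_subtype, Submodule.finrank_map_subtype_eq, hker]
  exact Subspace.finrank_add_finrank_dualCoannihilator_eq _

lemma finrank_le_finrank_inf_iInf_ker_add_card :
    Module.finrank k W ≤ Module.finrank k ↥(W ⊓ ⨅ i ∈ A, LinearMap.ker (φ i)) + A.card := by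
  classical
  have hspan :
      Module.finrank k (Submodule.span k ((fun i => (φ i).domRestrict W) '' A)) ≤ A.card := by
    rw [← Finset.coe_image]
    exact (finrank_span_finset_le_card _).trans Finset.card_image_le
  have hsum := finrank_span_domRestrict_add_finrank_inf_iInf_ker W φ A
  lia

variable {W φ A}

lemma finrank_inf_iInf_ker_add_card_eq
    (h : LinearIndepOn k (fun i => (φ i).domRestrict W) (A : Set ι)) :
    Module.finrank k ↥(W ⊓ ⨅ i ∈ A, LinearMap.ker (φ i)) + A.card = Module.finrank k W := by
  have hspan :
      Module.finrank k (Submodule.span k ((fun i => (φ i).domRestrict W) '' A)) = A.card := by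
    rw [Set.image_eq_range]
    exact (finrank_span_eq_card h).trans (Fintype.card_coe A)
  have hsum := finrank_span_domRestrict_add_finrank_inf_iInf_ker W φ A
  lia

end Functionals

section Forms

open scoped Matrix

variable {k : Type*} [Field k] {n : ℕ}

instance (m : ℕ) : Module.Finite k (homogeneousSubmodule (Fin n) k m) :=
  Module.Finite.iff_fg.mpr (homogeneousSubmodule_fg _ _ m)

lemma homogeneousSubmodule_eq_span_monomial (m : ℕ) :
    homogeneousSubmodule (Fin n) k m = Submodule.span k (Set.range fun s :
      (Finset.univ : Finset (Fin n)).finsuppAntidiag m => monomial s.1 (1 : k)) := by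
  refine le_antisymm (fun F hF => ?_) (Submodule.span_le.mpr ?_)
  · rw [F.as_sum]
    refine Submodule.sum_mem _ fun s hs => ?_
    have hdeg : s.degree = m := by
      by_contra hne
      exact mem_support_iff.mp hs (IsHomogeneous.coeff_eq_zero hF hne)
    rw [← mul_one (coeff s F), ← smul_eq_mul, ← smul_monomial]
    refine Submodule.smul_mem _ _ (Submodule.subset_span ⟨⟨s, ?_⟩, rfl⟩)
    simpa [Finset.mem_finsuppAntidiag, Finsupp.degree_eq_sum] using hdeg
  · rintro _ ⟨⟨s, hs⟩, rfl⟩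
    refine isHomogeneous_monomial _ ?_
    simpa [Finset.mem_finsuppAntidiag, Finsupp.degree_eq_sum] using hs

lemma finrank_homogeneousSubmodule (n m : ℕ) :
    Module.finrank k (homogeneousSubmodule (Fin (n + 1)) k m) = (n + m).choose n := by
  have hli := (basisMonomials (Fin (n + 1)) k).linearIndependent.comp
    (fun s : (Finset.univ : Finset (Fin (n + 1))).finsuppAntidiag m => s.1) Subtype.val_injective
  rw [coe_basisMonomials] at hli
  rw [homogeneousSubmodule_eq_span_monomial]
  refine (finrank_span_eq_card hli).trans ?_
  rw [Fintype.card_coe, Finset.card_finsuppAntidiag_nat_eq_choose, Finset.card_univ,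
    Fintype.card_fin, Nat.add_right_comm, Nat.add_sub_cancel, Nat.choose_symm_add]

/-- The gradient of the polynomial function `F` at the vector `v`. -/
noncomputable def gradAt (F : MvPolynomial (Fin n) k) (v : Fin n → k) : Fin n → k :=
  fun i => eval v (pderiv i F)

lemma gradAt_mul (F G : MvPolynomial (Fin n) k) (v : Fin n → k) :
    gradAt (F * G) v = eval v F • gradAt G v + eval v G • gradAt F v := by
  ext i
  simp [gradAt, Derivation.leibniz]

lemma dotProduct_gradAt_self {m : ℕ} {F : MvPolynomial (Fin n) k} (hF : F.IsHomogeneous m)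
    (v : Fin n → k) : v ⬝ᵥ gradAt F v = m * eval v F := by
  simpa [map_sum, dotProduct, gradAt] using congrArg (eval v) hF.sum_X_mul_pderiv

/-- The functional taking a polynomial to the `x.2`-th coordinate of its gradient at the chosen
representative of the point `x.1`. -/
noncomputable def gradLM (x : ProjSpace k n × Fin (n + 1)) :
    Module.Dual k (MvPolynomial (Fin (n + 1)) k) :=
  evalLM k x.1.rep ∘ₗ (pderiv x.2).toLinearMap

lemma homogeneousSubmodule_inf_iInf_doubleVanishing {d : ℕ} (hd : (d : k) ≠ 0)
    (A : Finset (ProjSpace k n)) :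
    homogeneousSubmodule (Fin (n + 1)) k d ⊓ ⨅ p ∈ A, doubleVanishing k p.rep =
      homogeneousSubmodule (Fin (n + 1)) k d ⊓
        ⨅ x ∈ A ×ˢ (Finset.univ : Finset (Fin (n + 1))), LinearMap.ker (gradLM x) := by
  ext F
  simp only [Submodule.mem_inf, Submodule.mem_iInf, Finset.mem_product, Finset.mem_univ, and_true,
    doubleVanishing, Prod.forall, LinearMap.mem_ker]
  refine and_congr_right fun hF => forall_congr' fun p => ⟨?_, ?_⟩
  · exact fun h i hp => (h hp).2 i
  · refine fun h hp => ⟨?_, fun i => h i hp⟩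
    have hgrad : gradAt F p.rep = 0 := funext fun i => h i hp
    have heuler := dotProduct_gradAt_self hF p.rep
    rw [hgrad, dotProduct_zero] at heuler
    simpa [hd, evalLM, aeval_eq_eval] using heuler.symm

lemma h1_eq_zero_of_linearIndepOn {d : ℕ} (hd : (d : k) ≠ 0) {A : Finset (ProjSpace k n)}
    (h : LinearIndepOn k (fun x => (gradLM x).domRestrict (homogeneousSubmodule (Fin (n + 1)) k d))
      ((A ×ˢ (Finset.univ : Finset (Fin (n + 1))) : Finset _) : Set _)) : h1 k n d A = 0 := by
  have hcount := finrank_inf_iInf_ker_add_card_eq h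
  rw [finrank_homogeneousSubmodule, Finset.card_product, Finset.card_univ, Fintype.card_fin,
    ← homogeneousSubmodule_inf_iInf_doubleVanishing hd] at hcount
  rw [h1, h0, ← hcount]
  push_cast
  ring

/-- Forms of degree `m` vanishing at the points of `A`. -/
noncomputable def vanishingForms (m : ℕ) (A : Finset (ProjSpace k n)) :
    Submodule k (MvPolynomial (Fin (n + 1)) k) :=
  homogeneousSubmodule (Fin (n + 1)) k m ⊓ ⨅ p ∈ A, LinearMap.ker (evalLM k p.rep)

instance (m : ℕ) (A : Finset (ProjSpace k n)) : Module.Finite k (vanishingForms m A) :=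
  inferInstanceAs (Module.Finite k ↥(homogeneousSubmodule (Fin (n + 1)) k m ⊓ _))

lemma mem_vanishingForms_iff {m : ℕ} {A : Finset (ProjSpace k n)}
    {F : MvPolynomial (Fin (n + 1)) k} :
    F ∈ vanishingForms m A ↔ F.IsHomogeneous m ∧ ∀ p ∈ A, eval p.rep F = 0 := by
  simp [vanishingForms, evalLM, aeval_eq_eval]

lemma choose_le_finrank_vanishingForms_add_card (m : ℕ) (A : Finset (ProjSpace k n)) :
    (n + m).choose n ≤ Module.finrank k (vanishingForms m A) + A.card := by
  rw [← finrank_homogeneousSubmodule (k := k)]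
  exact finrank_le_finrank_inf_iInf_ker_add_card _ _ A

end Forms

section IndependentConditions

open scoped Matrix

variable {k : Type*} [Field k]

lemma mem_span_singleton_of_dotProduct_eq_zero {u w x y : Fin 3 → k}
    (huw : LinearIndependent k ![u, w]) (hy : y ≠ 0) (hxu : x ⬝ᵥ u = 0) (hxw : x ⬝ᵥ w = 0)
    (hyu : y ⬝ᵥ u = 0) (hyw : y ⬝ᵥ w = 0) : x ∈ k ∙ y := by
  rw [Submodule.mem_span_singleton]
  by_contra! hyx
  have hcross : y ⨯₃ x ≠ 0 :=
    crossProduct_ne_zero_iff_linearIndependent.mpr ((LinearIndependent.pair_iff' hy).mpr hyx)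
  have hparallel : ∀ z : Fin 3 → k, x ⬝ᵥ z = 0 → y ⬝ᵥ z = 0 → ∃ t : k, t • (y ⨯₃ x) = z := by
    intro z hxz hyz
    by_contra! hne
    refine crossProduct_ne_zero_iff_linearIndependent.mpr
      ((LinearIndependent.pair_iff' hcross).mpr hne) ?_
    rw [cross_cross_eq_smul_sub_smul, hxz, hyz, zero_smul, zero_smul, sub_zero]
  obtain ⟨t, rfl⟩ := hparallel u hxu hyu
  obtain ⟨t', rfl⟩ := hparallel w hxw hyw
  refine crossProduct_ne_zero_iff_linearIndependent.mpr huw ?_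
  rw [map_smul, map_smul, LinearMap.smul_apply, cross_self, smul_zero, smul_zero]

/-- The projective hypersurfaces `c = 0` and `g = 0` meet transversally: the gradients of `c` and
`g` are linearly independent at every common zero. -/
def MeetTransversally {n : ℕ} (c g : MvPolynomial (Fin n) k) : Prop :=
  ∀ v : Fin n → k, v ≠ 0 → eval v c = 0 → eval v g = 0 →
    LinearIndependent k ![gradAt c v, gradAt g v]

variable [IsAlgClosed k] {a b s m : ℕ} {c g : MvPolynomial (Fin 3) k} {S A : Finset (ProjSpace k 2)}
  (hc : c.IsHomogeneous a) (hc0 : c ≠ 0) (hg : g.IsHomogeneous b) (hs : a + b = s + 3)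
  (hS : ↑S = projZeroLocus k 2 c ∩ projZeroLocus k 2 g) (hA : A ⊂ S)

include hc hc0 hg hs hS hA

lemma eq_zero_of_forall_sum_mul_eval_eq_zero (hsm : s ≤ m) {β : ProjSpace k 2 → k}
    (hβ : ∀ F : MvPolynomial (Fin 3) k, F.IsHomogeneous m → ∑ q ∈ A, β q * eval q.rep F = 0) :
    ∀ q ∈ A, β q = 0 := by
  classical
  obtain ⟨p, hpS, hpA⟩ := Finset.exists_of_ssubset hA
  have hzero := cayleyBacharach hc hc0 hg hs hS hsm (β := fun q => if q ∈ A then β q else 0)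
    (fun F hF => ?_) hpS (if_neg hpA)
  · exact fun q hq => by simpa only [if_pos hq] using hzero q (hA.1 hq)
  · simp only [ite_mul, zero_mul]
    rw [Finset.sum_ite_mem, Finset.inter_eq_right.mpr hA.1, hβ F hF]

lemma finrank_vanishingForms_add_card (hsm : s ≤ m) :
    Module.finrank k (vanishingForms m A) + A.card = (2 + m).choose 2 := by
  rw [← finrank_homogeneousSubmodule (k := k)]
  refine finrank_inf_iInf_ker_add_card_eq (linearIndepOn_domRestrict_iff.mpr fun β hβ => ?_)
  exact eq_zero_of_forall_sum_mul_eval_eq_zero hc hc0 hg hs hS hA hsm hβ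

lemma dotProduct_gradAt_eq_zero {e d : ℕ} {h : MvPolynomial (Fin 3) k} (hh : h.IsHomogeneous e)
    (hhA : ∀ q ∈ A, eval q.rep h = 0) (hd : e + s ≤ d) {α : ProjSpace k 2 → Fin 3 → k}
    (hα : ∀ F : MvPolynomial (Fin 3) k, F.IsHomogeneous d →
      ∑ q ∈ A, α q ⬝ᵥ gradAt F q.rep = 0) :
    ∀ q ∈ A, α q ⬝ᵥ gradAt h q.rep = 0 := by
  refine eq_zero_of_forall_sum_mul_eval_eq_zero hc hc0 hg hs hS hA (m := d - e) (by lia)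
    fun F hF => ?_
  have hhF : (h * F).IsHomogeneous d := by
    simpa only [Nat.add_sub_cancel' (le_of_add_le_left hd)] using hh.mul hF
  rw [← hα _ hhF]
  refine Finset.sum_congr rfl fun q hq => ?_
  rw [gradAt_mul, hhA q hq, zero_smul, zero_add, dotProduct_smul, smul_eq_mul, mul_comm]

lemma eq_zero_of_forall_sum_dotProduct_gradAt_eq_zero (htrans : MeetTransversally c g) {d : ℕ}
    (hd0 : (d : k) ≠ 0) (hcd : a + s ≤ d) (hgd : b + s ≤ d) {α : ProjSpace k 2 → Fin 3 → k}
    (hα : ∀ F : MvPolynomial (Fin 3) k, F.IsHomogeneous d →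
      ∑ q ∈ A, α q ⬝ᵥ gradAt F q.rep = 0) :
    ∀ q ∈ A, α q = 0 := by
  have hAc : ∀ q ∈ A, eval q.rep c = 0 := fun q hq => (hS.le (hA.1 hq)).1
  have hAg : ∀ q ∈ A, eval q.rep g = 0 := fun q hq => (hS.le (hA.1 hq)).2
  have hαc := dotProduct_gradAt_eq_zero hc hc0 hg hs hS hA hc hAc hcd hα
  have hαg := dotProduct_gradAt_eq_zero hc hc0 hg hs hS hA hg hAg hgd hα
  have hprop : ∀ q ∈ A, ∃ t : k, α q = t • q.rep := by
    intro q hq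
    have hmem := mem_span_singleton_of_dotProduct_eq_zero
      (htrans q.rep q.rep_nonzero (hAc q hq) (hAg q hq)) q.rep_nonzero (hαc q hq) (hαg q hq)
      (by rw [dotProduct_gradAt_self hc, hAc q hq, mul_zero])
      (by rw [dotProduct_gradAt_self hg, hAg q hq, mul_zero])
    obtain ⟨t, ht⟩ := Submodule.mem_span_singleton.mp hmem
    exact ⟨t, ht.symm⟩
  choose! t ht using hprop
  have hzero : ∀ q ∈ A, t q * d = 0 := by
    refine eq_zero_of_forall_sum_mul_eval_eq_zero hc hc0 hg hs hS hA (m := d) (by lia)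
      fun F hF => ?_
    rw [← hα F hF]
    refine Finset.sum_congr rfl fun q hq => ?_
    rw [ht q hq, smul_dotProduct, dotProduct_gradAt_self hF, smul_eq_mul, mul_assoc]
  intro q hq
  rw [ht q hq, (mul_eq_zero.mp (hzero q hq)).resolve_right hd0, zero_smul]

theorem h1_eq_zero_of_ssubset (htrans : MeetTransversally c g) {d : ℕ}
    (hd0 : (d : k) ≠ 0) (hcd : a + s ≤ d) (hgd : b + s ≤ d) : h1 k 2 d A = 0 := by
  refine h1_eq_zero_of_linearIndepOn hd0 (linearIndepOn_domRestrict_iff.mpr fun β hβ => ?_)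
  rintro ⟨q, i⟩ hqi
  refine congrFun (eq_zero_of_forall_sum_dotProduct_gradAt_eq_zero hc hc0 hg hs hS hA htrans hd0
    hcd hgd (α := fun q i => β (q, i)) (fun F hF => ?_) q (Finset.mem_product.mp hqi).1) i
  rw [← hβ F hF, Finset.sum_product]
  rfl

end IndependentConditions

section RelativelyPrime

variable {k : Type*} [Field k]

lemma exists_ne_zero_eval_eq_zero_of_prime [IsAlgClosed k] {σ : Type*} [Finite σ] [Nontrivial σ]
    {p : MvPolynomial σ k} (hp : Prime p) : ∃ v ≠ 0, eval v p = 0 := by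
  by_contra! hne
  have hdvd : ∀ i, p ∣ X i := by
    intro i
    rw [← Ideal.mem_span_singleton,
      ← ((Ideal.span_singleton_prime hp.ne_zero).mpr hp).isRadical.radical,
      ← vanishingIdeal_zeroLocus_eq_radical (K := k)]
    intro v hv
    have hpv : eval v p = 0 := by
      simpa [aeval_eq_eval] using hv p (Ideal.mem_span_singleton_self p)
    rw [not_imp_comm.mp (hne v) (not_not.mpr hpv)]
    simp
  obtain ⟨i, j, hij⟩ := exists_pair_ne σ
  have hXp : X i ∣ p := hp.irreducible.dvd_symm (X_prime (R := k)).irreducible (hdvd i)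
  exact hij (X_dvd_X.mp (hXp.trans (hdvd j)))

namespace MeetTransversally

variable {n : ℕ} {c g : MvPolynomial (Fin n) k} (h : MeetTransversally c g)

include h

lemma ne_zero_left {v : Fin n → k} (hv : v ≠ 0) (hvc : eval v c = 0) (hvg : eval v g = 0) :
    c ≠ 0 := by
  rintro rfl
  refine (h v hv hvc hvg).ne_zero 0 ?_
  ext i
  simp [gradAt]

lemma ne_zero_right {v : Fin n → k} (hv : v ≠ 0) (hvc : eval v c = 0) (hvg : eval v g = 0) :
    g ≠ 0 := by
  rintro rfl
  refine (h v hv hvc hvg).ne_zero 1 ?_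
  ext i
  simp [gradAt]

lemma isRelPrime [IsAlgClosed k] [Nontrivial (Fin n)] (hc0 : c ≠ 0) : IsRelPrime c g := by
  rw [UniqueFactorizationMonoid.isRelPrime_iff_no_prime_factors hc0]
  rintro p ⟨c', rfl⟩ ⟨g', rfl⟩ hp
  obtain ⟨v, hv, hpv⟩ := exists_ne_zero_eval_eq_zero_of_prime hp
  have hli := h v hv (by rw [map_mul, hpv, zero_mul]) (by rw [map_mul, hpv, zero_mul])
  simp only [gradAt_mul, hpv, zero_smul, zero_add] at hli
  have hzero := LinearIndependent.pair_iff.mp hli (eval v g') (-eval v c')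
    (by rw [neg_smul, smul_comm, add_neg_cancel])
  exact hli.ne_zero 1 (by simp [hzero.1])

end MeetTransversally

end RelativelyPrime

section DoubleVanishing

variable {k : Type*} [Field k] {n : ℕ} {S : Finset (ProjSpace k n)}

lemma mul_mem_doubleVanishing {v : Fin n → k} {F G : MvPolynomial (Fin n) k} (hF : eval v F = 0)
    (hG : eval v G = 0) : F * G ∈ doubleVanishing k v := by
  simp [doubleVanishing, evalLM, aeval_eq_eval, Derivation.leibniz, hF, hG]

lemma finrank_map_mulLeft {c : MvPolynomial (Fin n) k} (hc0 : c ≠ 0)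
    (W : Submodule k (MvPolynomial (Fin n) k)) :
    Module.finrank k (W.map (LinearMap.mulLeft k c)) = Module.finrank k W :=
  (Submodule.equivMapOfInjective _ (mul_right_injective₀ hc0) W).finrank_eq.symm

variable {a b d m r : ℕ} {c g : MvPolynomial (Fin (n + 1)) k}

lemma map_mulLeft_vanishingForms_le (hc : c.IsHomogeneous a) (hSc : ∀ p ∈ S, eval p.rep c = 0)
    (hd : a + m = d) :
    (vanishingForms m S).map (LinearMap.mulLeft k c) ≤
      homogeneousSubmodule (Fin (n + 1)) k d ⊓ ⨅ p ∈ S, doubleVanishing k p.rep := by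
  rintro _ ⟨F, hF, rfl⟩
  obtain ⟨hFm, hFS⟩ := mem_vanishingForms_iff.mp hF
  simp only [Submodule.mem_inf, Submodule.mem_iInf]
  exact ⟨hd ▸ hc.mul hFm, fun p hp => mul_mem_doubleVanishing (hSc p hp) (hFS p hp)⟩

lemma map_mulLeft_sq_le (hg : g.IsHomogeneous b) (hSg : ∀ p ∈ S, eval p.rep g = 0)
    (hd : 2 * b + r = d) :
    (homogeneousSubmodule (Fin (n + 1)) k r).map (LinearMap.mulLeft k (g ^ 2)) ≤
      homogeneousSubmodule (Fin (n + 1)) k d ⊓ ⨅ p ∈ S, doubleVanishing k p.rep := by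
  rintro _ ⟨F, hF, rfl⟩
  simp only [Submodule.mem_inf, Submodule.mem_iInf, LinearMap.mulLeft_apply]
  refine ⟨?_, fun p hp => ?_⟩
  · rw [← hd, mul_comm 2 b]
    exact (hg.pow 2).mul hF
  · rw [pow_two, mul_assoc]
    exact mul_mem_doubleVanishing (hSg p hp) (by rw [map_mul, hSg p hp, zero_mul])

lemma disjoint_map_mulLeft_of_isRelPrime {σ : Type*} {c f : MvPolynomial σ k}
    (hc : c.IsHomogeneous a) (hc0 : c ≠ 0) (hcf : IsRelPrime c f) (hr : r < a)
    (W : Submodule k (MvPolynomial σ k)) :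
    Disjoint (W.map (LinearMap.mulLeft k c))
      ((homogeneousSubmodule σ k r).map (LinearMap.mulLeft k f)) := by
  rw [Submodule.disjoint_def]
  rintro _ ⟨F, -, rfl⟩ ⟨G, hG, hGF⟩
  have hdvd : c ∣ G := hcf.dvd_of_dvd_mul_left ⟨F, hGF⟩
  have hG0 : G = 0 := by
    by_contra hG0
    have hle := totalDegree_le_of_dvd_of_isDomain hdvd hG0
    rw [hc.totalDegree hc0, IsHomogeneous.totalDegree hG hG0] at hle
    exact hr.not_ge hle
  rw [← hGF, hG0, map_zero]

theorem finrank_vanishingForms_add_choose_le_h0 (hc : c.IsHomogeneous a) (hc0 : c ≠ 0)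
    (hg : g.IsHomogeneous b) (hg0 : g ≠ 0) (hcg : IsRelPrime c g)
    (hSc : ∀ p ∈ S, eval p.rep c = 0) (hSg : ∀ p ∈ S, eval p.rep g = 0) (hm : a + m = d)
    (hr : 2 * b + r = d) (hra : r < a) :
    Module.finrank k (vanishingForms m S) + (n + r).choose n ≤ h0 k n d S := by
  have hdisj := disjoint_map_mulLeft_of_isRelPrime hc hc0 (hcg.pow_right (n := 2)) hra
    (vanishingForms m S)
  rw [← finrank_homogeneousSubmodule (k := k), ← finrank_map_mulLeft hc0 (vanishingForms m S),
    ← finrank_map_mulLeft (pow_ne_zero 2 hg0) (homogeneousSubmodule _ k r),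
    ← Submodule.finrank_sup_add_finrank_inf_eq,
    hdisj.eq_bot, finrank_bot, add_zero]
  exact Submodule.finrank_mono
    (sup_le (map_mulLeft_vanishingForms_le hc hSc hm) (map_mulLeft_sq_le hg hSg hr))

lemma exists_isHomogeneous_one_eval_eq (l : Module.Dual k (Fin (n + 1) → k)) :
    ∃ f : MvPolynomial (Fin (n + 1)) k, f.IsHomogeneous 1 ∧ ∀ x, eval x f = l x :=
  ⟨linearSubst (l.smulRight (Pi.single 0 1)) (X 0),
    isHomogeneous_linearSubst _ (isHomogeneous_X k 0), fun x => by simp [eval_linearSubst]⟩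

theorem spans_of_finrank_vanishingForms_lt
    (h : Module.finrank k (vanishingForms (m + 1) S) < (n + m).choose n) : Spans k n S := by
  by_contra hne
  obtain ⟨l, hl0, hl⟩ := Submodule.exists_le_ker_of_lt_top _ (lt_top_iff_ne_top.mpr hne)
  obtain ⟨f, hf, hfl⟩ := exists_isHomogeneous_one_eval_eq l
  have hf0 : f ≠ 0 := by
    rintro rfl
    exact hl0 (LinearMap.ext fun x => by rw [← hfl x, map_zero, LinearMap.zero_apply])
  have hle : (homogeneousSubmodule (Fin (n + 1)) k m).map (LinearMap.mulLeft k f) ≤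
      vanishingForms (m + 1) S := by
    rintro _ ⟨F, hF, rfl⟩
    refine mem_vanishingForms_iff.mpr ⟨add_comm 1 m ▸ hf.mul hF, fun p hp => ?_⟩
    have hlp : l p.rep = 0 := hl (Submodule.subset_span (Set.mem_image_of_mem _ hp))
    rw [LinearMap.mulLeft_apply, map_mul, hfl, hlp, zero_mul]
  refine h.not_ge ?_
  rw [← finrank_homogeneousSubmodule (k := k), ← finrank_map_mulLeft hf0]
  exact Submodule.finrank_mono hle

end DoubleVanishing

section CompleteIntersection

variable {k : Type*} [Field k] [IsAlgClosed k] {a b : ℕ} {c g : MvPolynomial (Fin 3) k}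
  {S : Finset (ProjSpace k 2)}

lemma spans_of_le_card (hc : c.IsHomogeneous a) (hc0 : c ≠ 0) (hg : g.IsHomogeneous b)
    (hab : 4 ≤ a + b) (hS : ↑S = projZeroLocus k 2 c ∩ projZeroLocus k 2 g)
    (hcard : a + b ≤ S.card) : Spans k 2 S := by
  classical
  obtain ⟨p, hp⟩ : S.Nonempty := Finset.card_pos.mp (by lia)
  obtain ⟨t, ht⟩ : ∃ t, a + b = t + 1 + 3 := ⟨a + b - 4, by lia⟩
  have hdim := finrank_vanishingForms_add_card hc hc0 hg ht hS (Finset.erase_ssubset hp) le_rfl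
  have hmono : Module.finrank k (vanishingForms (t + 1) S) ≤
      Module.finrank k (vanishingForms (t + 1) (S.erase p)) :=
    Submodule.finrank_mono fun F hF => by
      rw [mem_vanishingForms_iff] at hF ⊢
      exact ⟨hF.1, fun q hq => hF.2 q (Finset.mem_of_mem_erase hq)⟩
  refine spans_of_finrank_vanishingForms_lt (m := t) ?_
  rw [Finset.card_erase_of_mem hp, ← add_assoc, Nat.choose_succ_succ', Nat.choose_one_right]
    at hdim
  lia

lemma choose_two_add_one_eq (m r : ℕ) :
    (2 + (m + r + 3)).choose 2 + 1 =
      (2 + m).choose 2 + (2 + r).choose 2 + (r + 3) * (m + 3) := by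
  qify
  rw [Nat.cast_choose_two, Nat.cast_choose_two, Nat.cast_choose_two]
  push_cast
  ring

theorem cubic_complete_intersection_minTerracini_general {d : ℕ} (ha : 3 ≤ a) (hab : a ≤ b)
    (hd : d + 3 = a + 2 * b) (hd0 : (d : k) ≠ 0) (hc : c.IsHomogeneous a) (hg : g.IsHomogeneous b)
    (htrans : MeetTransversally c g) (hS : ↑S = projZeroLocus k 2 c ∩ projZeroLocus k 2 g)
    (hcard : S.card = a * b) : S ∈ minTerracini k 2 d (a * b) := by
  have hSc : ∀ p ∈ S, eval p.rep c = 0 := fun p hp => (hS.le hp).1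
  have hSg : ∀ p ∈ S, eval p.rep g = 0 := fun p hp => (hS.le hp).2
  obtain ⟨p, hp⟩ : S.Nonempty := Finset.card_pos.mp (by nlinarith)
  have hc0 := htrans.ne_zero_left p.rep_nonzero (hSc p hp) (hSg p hp)
  have hg0 := htrans.ne_zero_right p.rep_nonzero (hSc p hp) (hSg p hp)
  obtain ⟨r, rfl⟩ := Nat.exists_eq_add_of_le' ha
  obtain ⟨m, hm⟩ : ∃ m, 2 * b = m + 3 := ⟨2 * b - 3, by lia⟩
  obtain rfl : d = m + r + 3 := by lia
  have hh0 := finrank_vanishingForms_add_choose_le_h0 hc hc0 hg hg0 (htrans.isRelPrime hc0) hSc hSg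
    (m := m) (r := r) (d := m + r + 3) (by lia) (by lia) (by lia)
  have hvan := choose_le_finrank_vanishingForms_add_card (k := k) m S
  have hchoose := choose_two_add_one_eq m r
  refine ⟨⟨hcard, spans_of_le_card hc hc0 hg (by lia) hS (by nlinarith), ?_, ?_⟩, fun A hA => ?_⟩
  · exact (Nat.choose_pos (Nat.le_add_right 2 r)).trans_le (le_of_add_le_right hh0)
  · have hcount : (2 + (m + r + 3)).choose 2 < h0 k 2 (m + r + 3) S + 3 * S.card := by
      rw [← hm, mul_left_comm, ← hcard] at hchoose
      lia
    rw [h1]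
    lia
  · exact h1_eq_zero_of_ssubset hc hc0 hg (s := r + b) (by lia) hS hA htrans hd0 (by lia) (by lia)

end CompleteIntersection

/-- Example: for even `d ≥ 6` and `x = 3d/2`, the complete intersection of a smooth plane
cubic and a smooth plane curve of degree `d/2` meeting it transversally is a minimally
Terracini set; in particular `T(2,d;3d/2)' ≠ ∅`. -/
theorem cubic_complete_intersection_minTerracini
    (k : Type*) [Field k] [IsAlgClosed k] [CharZero k]
    (d : ℕ) (hd : 6 ≤ d) (heven : Even d)
    (c g : MvPolynomial (Fin 3) k)
    (hc : IsSmoothPlaneCurve k 3 c) (hg : IsSmoothPlaneCurve k (d / 2) g)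
    (htrans : ∀ v : Fin 3 → k, v ≠ 0 →
      MvPolynomial.eval v c = 0 → MvPolynomial.eval v g = 0 →
      LinearIndependent k
        ![fun i => MvPolynomial.eval v (MvPolynomial.pderiv i c),
          fun i => MvPolynomial.eval v (MvPolynomial.pderiv i g)])
    (S : Finset (ProjSpace k 2))
    (hS : ↑S = projZeroLocus k 2 c ∩ projZeroLocus k 2 g)
    (hcard : S.card = 3 * d / 2) :
    S ∈ minTerracini k 2 d (3 * d / 2) ∧
      (minTerracini k 2 d (3 * d / 2)).Nonempty := by
  rw [show 3 * d / 2 = 3 * (d / 2) by grind] at hcard ⊢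
  have hmem : S ∈ minTerracini k 2 d (3 * (d / 2)) :=
    cubic_complete_intersection_minTerracini_general le_rfl (by lia) (by grind)
      (Nat.cast_ne_zero.mpr (by lia)) hc.2.1 hg.2.1 htrans hS hcard
  exact ⟨hmem, S, hmem⟩
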